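/- arXiv:2506.10572 — 2 statements merged into one kernel-verified Lean document; each statement's English description precedes it below -/
import Mathlib

section
/- Let x ∈ ℝ^K and b ∈ U^K be such that b_1/exp(x_1) ≤ ⋯ ≤ b_K/exp(x_K), let y be the maximizer of F_{1,x} over Δ^K ∩ {y : y_i ≤ b_i for all i}, and let ρ ∈ {0,…,K} be such that y_k = b_k for all k ≤ ρ and y_k < b_k for all k > ρ. For k ∈ {0,…,K−1} with s_k := 1 − Σ_{i=1}^{k} b_i > 0, set z_k = (Σ_{i=k+1}^{K} exp(x_i))/s_k. Then for every such k, exp(x_{k+1})/z_k > b_{k+1} implies ρ ≠ k. -/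
/-- The probability simplex Δ^K. -/
def simplex (K : ℕ) : Set (Fin K → ℝ) :=
  {p | (∀ i, 0 ≤ p i) ∧ ∑ i, p i = 1}

/-- The entropic objective F_{τ,x}(y) = Σ x_i y_i − τ Σ y_i log y_i
(Real.log 0 = 0 gives the convention 0·log 0 = 0). -/
noncomputable def F {K : ℕ} (τ : ℝ) (x y : Fin K → ℝ) : ℝ :=
  ∑ i, x i * y i - τ * ∑ i, y i * Real.log (y i)

/-- s_k = 1 − Σ_{i=1}^k b_i (0-based: indices i with i < k). -/
noncomputable def sHead {K : ℕ} (b : Fin K → ℝ) (k : ℕ) : ℝ :=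
  1 - ∑ i ∈ Finset.univ.filter (fun i : Fin K => (i : ℕ) < k), b i

/-- r_k = Σ_{i=k+1}^K exp(x_i) (0-based: indices i with k ≤ i). -/
noncomputable def rTail {K : ℕ} (x : Fin K → ℝ) (k : ℕ) : ℝ :=
  ∑ i ∈ Finset.univ.filter (fun i : Fin K => k ≤ (i : ℕ)), Real.exp (x i)

lemma ent_tangent (u v : ℝ) (hu : 0 < u) (hv : 0 ≤ v) :
    v * Real.log u + v - u ≤ v * Real.log v := by
  rcases hv.eq_or_lt with rfl | hv
  · simp; exact hu.le
  · have h := Real.log_le_sub_one_of_pos (div_pos hu hv)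
    rw [Real.log_div hu.ne' hv.ne'] at h
    have h2 := mul_le_mul_of_nonneg_left h hv.le
    have h3 : v * (u / v - 1) = u - v := by field_simp
    nlinarith

lemma transfer_contra {K : ℕ} (x b y : Fin K → ℝ)
    (hy : y ∈ simplex K ∧ ∀ i, y i ≤ b i)
    (hymax : ∀ z, (z ∈ simplex K ∧ ∀ i, z i ≤ b i) → F 1 x z ≤ F 1 x y)
    (p j : Fin K) (hp : y p < b p)
    (hlt : y p * Real.exp (x j) < y j * Real.exp (x p)) : False := by
  obtain ⟨⟨hy0, hy1⟩, hyb⟩ := hy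
  have hpj : p ≠ j := by rintro rfl; exact lt_irrefl _ hlt
  have ep := Real.exp_pos (x p)
  have ej := Real.exp_pos (x j)
  obtain ⟨ε, hε, hε1, hε2⟩ : ∃ ε : ℝ, 0 < ε ∧ y p + ε ≤ b p ∧
      (y p + ε) * Real.exp (x j) < (y j - ε) * Real.exp (x p) := by
    set D := y j * Real.exp (x p) - y p * Real.exp (x j) with hD
    have hD0 : 0 < D := by linarith
    set S := Real.exp (x j) + Real.exp (x p) with hS
    have hS0 : 0 < S := by positivity
    refine ⟨min (b p - y p) (D / (2 * S)), lt_min (by linarith) (by positivity), ?_, ?_⟩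
    · linarith [min_le_left (b p - y p) (D / (2 * S))]
    · have h := min_le_right (b p - y p) (D / (2 * S))
      rw [le_div_iff₀ (by positivity)] at h
      nlinarith
  have zp : 0 < y p + ε := by linarith [hy0 p]
  have zj : 0 < y j - ε := by
    have : 0 < (y j - ε) * Real.exp (x p) := lt_trans (by positivity) hε2
    exact pos_of_mul_pos_left this ep.le
  have hlog : Real.log (y p + ε) + x j < Real.log (y j - ε) + x p := by
    have h := Real.log_lt_log (by positivity) hε2
    rwa [Real.log_mul zp.ne' ej.ne', Real.log_mul zj.ne' ep.ne', Real.log_exp, Real.log_exp] at h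
  let d : Fin K → ℝ := fun i => (if i = p then ε else 0) - (if i = j then ε else 0)
  have hdp : d p = ε := by simp [d, hpj]
  have hdj : d j = -ε := by simp [d, hpj.symm]
  have hdo : ∀ i, i ≠ p → i ≠ j → d i = 0 := by intro i h1 h2; simp [d, h1, h2]
  have hsum : ∀ c : Fin K → ℝ, ∑ i, c i * d i = ε * (c p - c j) := by
    intro c
    simp [d, mul_sub, Finset.sum_sub_distrib]
    ring
  have key := hymax (fun i => y i + d i) ⟨⟨?_, ?_⟩, ?_⟩
  · have hterm : ∀ i, (x i * y i - y i * Real.log (y i)) -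
        (x i * (y i + d i) - (y i + d i) * Real.log (y i + d i)) ≤
        (1 + Real.log (y i + d i) - x i) * d i := by
      intro i
      by_cases h : d i = 0
      · simp [h]
      · have hz : 0 < y i + d i := by
          by_cases h1 : i = p
          · subst h1; rw [hdp]; exact zp
          · by_cases h2 : i = j
            · subst h2; rw [hdj]; linarith
            · exact absurd (hdo i h1 h2) h
        have := ent_tangent _ _ hz (hy0 i)
        nlinarith
    have hs := Finset.sum_le_sum (fun i (_ : i ∈ Finset.univ) => hterm i)
    rw [hsum] at hs
    simp only [Finset.sum_sub_distrib] at hs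
    simp only [F, one_mul] at key
    rw [hdp, hdj, ← sub_eq_add_neg] at hs
    have : ε * (1 + Real.log (y p + ε) - x p - (1 + Real.log (y j - ε) - x j)) < 0 :=
      mul_neg_of_pos_of_neg hε (by linarith)
    linarith
  · intro i
    by_cases h1 : i = p
    · subst h1; simp only [hdp]; exact zp.le
    · by_cases h2 : i = j
      · subst h2; simp only [hdj]; linarith
      · simp only [hdo i h1 h2]; linarith [hy0 i]
  · have := hsum (fun _ => 1)
    simp only [one_mul, sub_self, mul_zero] at this
    rw [Finset.sum_add_distrib, this, hy1, add_zero]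
  · intro i
    by_cases h1 : i = p
    · subst h1; simp only [hdp]; exact hε1
    · by_cases h2 : i = j
      · subst h2; simp only [hdj]; linarith [hyb i]
      · simp only [hdo i h1 h2]; linarith [hyb i]

/-- with b_i/exp(x_i) nondecreasing and threshold ρ for the
maximizer of the upper-bounded problem: for every k ∈ {0,…,K−1} with s_k > 0,
if exp(x_{k+1})/z_k > b_{k+1} (z_k = r_k/s_k) then ρ ≠ k. -/
theorem ubsoftmax_threshold_excludes
    (K : ℕ) (hK : 1 ≤ K) (x b : Fin K → ℝ)
    (hb : ∀ i, 0 < b i ∧ b i ≤ 1) (hbsum : 1 ≤ ∑ i, b i)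
    (hsorted : ∀ i j : Fin K, i ≤ j → b i / Real.exp (x i) ≤ b j / Real.exp (x j))
    (y : Fin K → ℝ)
    (hy : y ∈ simplex K ∧ ∀ i, y i ≤ b i)
    (hymax : ∀ z, (z ∈ simplex K ∧ ∀ i, z i ≤ b i) → F 1 x z ≤ F 1 x y)
    (ρ : ℕ) (hρ : ρ ≤ K)
    (hsat : ∀ k : Fin K, (k : ℕ) < ρ → y k = b k)
    (hfree : ∀ k : Fin K, ρ ≤ (k : ℕ) → y k < b k) :
    ∀ k, ∀ hk : k < K, 0 < sHead b k →
      b ⟨k, hk⟩ < Real.exp (x ⟨k, hk⟩) / (rTail x k / sHead b k) → ρ ≠ k := by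
  intro k hk hs hlt hρk
  subst hρk
  have hr : 0 < rTail x ρ := by
    unfold rTail
    exact Finset.sum_pos (fun i _ => Real.exp_pos _) ⟨⟨ρ, hk⟩, by simp⟩
  have hp := hfree ⟨ρ, hk⟩ le_rfl
  have ep := Real.exp_pos (x ⟨ρ, hk⟩)
  set p : Fin K := ⟨ρ, hk⟩ with hpdef
  have htail : ∑ i ∈ Finset.univ.filter (fun i : Fin K => ρ ≤ (i : ℕ)), y i = sHead b ρ := by
    have h1 := Finset.sum_filter_add_sum_filter_not Finset.univ (fun i : Fin K => (i : ℕ) < ρ) y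
    rw [hy.1.2] at h1
    have h2 : ∑ i ∈ Finset.univ.filter (fun i : Fin K => (i : ℕ) < ρ), y i =
        ∑ i ∈ Finset.univ.filter (fun i : Fin K => (i : ℕ) < ρ), b i :=
      Finset.sum_congr rfl (fun i hi => hsat i (by simpa using hi))
    simp only [not_lt] at h1
    unfold sHead
    linarith
  have hlt2 : y p * rTail x ρ < Real.exp (x p) * sHead b ρ := by
    have h := hp.trans hlt
    rwa [div_div_eq_mul_div, lt_div_iff₀ hr] at h
  have hex : ∃ j, y p * Real.exp (x j) < y j * Real.exp (x p) := by
    by_contra hcon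
    push Not at hcon
    have h := Finset.sum_le_sum (s := Finset.univ.filter (fun i : Fin K => ρ ≤ (i : ℕ)))
      (fun i _ => hcon i)
    rw [← Finset.sum_mul, ← Finset.mul_sum, htail] at h
    unfold rTail at hlt2
    linarith
  obtain ⟨j, hj⟩ := hex
  exact transfer_contra x b y hy hymax p j hp hj
end

section
/- Let x ∈ ℝ^K and b ∈ U^K be such that b_1/exp(x_1) ≤ ⋯ ≤ b_K/exp(x_K), and let k ∈ {0,…,K−1} satisfy s_k := 1 − Σ_{i=1}^{k} b_i > 0; set z_k = (Σ_{i=k+1}^{K} exp(x_i))/s_k. If exp(x_{k+1})/z_k ≤ b_{k+1}, then exp(x_i)/z_k ≤ b_i for all i > k; consequently the vector y(k) ∈ ℝ^K defined by y(k)_i = b_i for i ≤ k and y(k)_i = exp(x_i)/z_k for i > k satisfies y(k) ∈ Δ^K and 0 ≤ y(k)_i ≤ b_i for all i, i.e. y(k) is a feasible point of the upper-bounded problem. -/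
/-- with b_i/exp(x_i) nondecreasing, k ∈ {0,…,K−1}, s_k > 0 and
z_k = r_k/s_k, if exp(x_{k+1})/z_k ≤ b_{k+1} then exp(x_i)/z_k ≤ b_i for all
i > k, and the vector y(k) (first k coordinates at b, the rest exp(x_i)/z_k)
is a feasible point of the upper-bounded problem: y(k) ∈ Δ^K and
0 ≤ y(k)_i ≤ b_i for all i. -/
theorem ubsoftmax_candidate_feasible
    (K : ℕ) (hK : 1 ≤ K) (x b : Fin K → ℝ)
    (hb : ∀ i, 0 < b i ∧ b i ≤ 1) (hbsum : 1 ≤ ∑ i, b i)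
    (hsorted : ∀ i j : Fin K, i ≤ j → b i / Real.exp (x i) ≤ b j / Real.exp (x j))
    (k : ℕ) (hk : k < K) (hs : 0 < sHead b k)
    (hcond : Real.exp (x ⟨k, hk⟩) / (rTail x k / sHead b k) ≤ b ⟨k, hk⟩) :
    (∀ i : Fin K, k ≤ (i : ℕ) → Real.exp (x i) / (rTail x k / sHead b k) ≤ b i) ∧
    (fun i : Fin K =>
        if (i : ℕ) < k then b i else Real.exp (x i) / (rTail x k / sHead b k)) ∈
      simplex K ∧
    ∀ i : Fin K,
      0 ≤ (if (i : ℕ) < k then b i else Real.exp (x i) / (rTail x k / sHead b k)) ∧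
      (if (i : ℕ) < k then b i else Real.exp (x i) / (rTail x k / sHead b k)) ≤ b i := by
  have hr : 0 < rTail x k := by
    unfold rTail
    apply Finset.sum_pos
    · intro i _
      exact Real.exp_pos _
    · exact ⟨⟨k, hk⟩, by simp⟩
  have hz : 0 < rTail x k / sHead b k := div_pos hr hs
  have h1 : ∀ i : Fin K, k ≤ (i : ℕ) →
      Real.exp (x i) / (rTail x k / sHead b k) ≤ b i := by
    intro i hi
    have h2 := hsorted ⟨k, hk⟩ i hi
    have e1 := Real.exp_pos (x ⟨k, hk⟩)
    have e2 := Real.exp_pos (x i)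
    have h3 : 1 / (rTail x k / sHead b k) ≤ b ⟨k, hk⟩ / Real.exp (x ⟨k, hk⟩) := by
      rw [le_div_iff₀ e1, one_div_mul_eq_div]
      exact hcond
    have h4 := h3.trans h2
    rw [le_div_iff₀ e2, one_div_mul_eq_div] at h4
    exact h4
  have h0 : ∀ i : Fin K,
      0 ≤ (if (i : ℕ) < k then b i else Real.exp (x i) / (rTail x k / sHead b k)) := by
    intro i
    split_ifs
    · exact (hb i).1.le
    · exact (div_pos (Real.exp_pos _) hz).le
  refine ⟨h1, ⟨h0, ?_⟩, fun i => ⟨h0 i, ?_⟩⟩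
  · rw [Finset.sum_ite, ← Finset.sum_div]
    have h5 : ∑ i ∈ Finset.univ.filter (fun i : Fin K => ¬ (i : ℕ) < k), Real.exp (x i)
        = rTail x k := by
      simp only [rTail, not_lt]
    rw [h5, div_div_cancel₀ hr.ne']
    simp [sHead]
  · split_ifs with h
    · exact le_rfl
    · exact h1 i (not_lt.mp h)
end
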